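/- Let R(x,y) = (α_x(y), β_y(x)) be a non-degenerate YBE solution on a set X, and let Θ : G_R → Aut(A_R) be a group homomorphism with Θ(ι_G x)(ι_A y) = ι_A(α_x(y)) for all x, y ∈ X. Then there exists a unique map b : G_R → A_R satisfying b(ι_G x) = ι_A x for all x ∈ X and the 1-cocycle identity b(gh) = b(g)·Θ(g)(b(h)) for all g, h ∈ G_R, and this b is bijective. Consequently ρ_g(a) := b(g)·Θ(g)(a) defines a regular affine action of G_R on A_R (the affine action associated to R). -/

import Mathlib

/-- The map acting as `R` on the first two coordinates of `X × X × X` (i.e. `R × id_X`). -/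
def Rfst {X : Type*} (R : X × X → X × X) : X × X × X → X × X × X :=
  fun p => ((R (p.1, p.2.1)).1, (R (p.1, p.2.1)).2, p.2.2)

/-- The map acting as `R` on the last two coordinates of `X × X × X` (i.e. `id_X × R`). -/
def Rsnd {X : Type*} (R : X × X → X × X) : X × X × X → X × X × X :=
  fun p => (p.1, R p.2)

/-- The braid relation `(R × id) ∘ (id × R) ∘ (R × id) = (id × R) ∘ (R × id) ∘ (id × R)`. -/
def IsBraided {X : Type*} (R : X × X → X × X) : Prop :=
  Rfst R ∘ Rsnd R ∘ Rfst R = Rsnd R ∘ Rfst R ∘ Rsnd R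

/-- The map `R(x, y) = (α_x(y), β_y(x))`. -/
def YBEform {X : Type*} (α β : X → X → X) : X × X → X × X :=
  fun p => (α p.1 p.2, β p.2 p.1)


/-- The defining relators of the structure group of `R(x,y) = (α_x(y), β_y(x))`:
`x * y = α_x(y) * β_y(x)`. -/
def ybRels {X : Type*} (α β : X → X → X) : Set (FreeGroup X) :=
  {r | ∃ x y : X, r = FreeGroup.of x * FreeGroup.of y *
        (FreeGroup.of (α x y) * FreeGroup.of (β y x))⁻¹}

/-- The structure group `G_R` of the solution `R(x,y) = (α_x(y), β_y(x))`. -/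
abbrev StructureGroup {X : Type*} (α β : X → X → X) : Type _ :=
  PresentedGroup (ybRels α β)

/-- The defining relators of the derived structure group of `R`:
`x * y = y * φ_R(x,y)` with `φ_R(x,y) = α_y(β_{α_x⁻¹(y)}(x))`. -/
def derivedRels {X : Type*} (α β αinv : X → X → X) : Set (FreeGroup X) :=
  {r | ∃ x y : X, r = FreeGroup.of x * FreeGroup.of y *
        (FreeGroup.of y * FreeGroup.of (α y (β (αinv x y) x)))⁻¹}

/-- The derived structure group `A_R` of the solution `R`. -/
abbrev DerivedGroup {X : Type*} (α β αinv : X → X → X) : Type _ :=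
  PresentedGroup (derivedRels α β αinv)

/-!
A map `b : G → A` is a 1-cocycle exactly when `g ↦ (b g, g)` is a homomorphism `G → A ⋊ G`, so on
a group given by generators it is determined by its values there, and it exists as soon as these
values respect the relations.

For bijectivity, let `G_R` act on `X` by extending `α`. The maps `g ↦ g · ι_G(g⁻¹ • x)` satisfy the
relations of `A_R`, and they are permutations of `G_R` as soon as the diagonal `x ↦ α_x⁻¹(x)` is
bijective; hence `A_R` acts on the set `G_R` from the right. By the cocycle identity, `b` turns this
action into right multiplication, so `a ↦ 1 · a` is a section of `b`. The orbit of `1` is stable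
under right multiplication by generators and their inverses, so this section is onto.

The diagonal is bijective because the braid relation gives, for `u = α_y⁻¹(y)`,
`α_{β_u(y)} = α_u` and `β_u(y) = α_u(β_{α_u⁻¹(u)}(u))`, from which `y` can be recovered; conversely,
if `β_u(w) = u`, then `y = α_w(u)` satisfies `α_y = α_w`, so `α_y⁻¹(y) = u`.
-/

section Cocycle

variable {G A : Type*} [Group G] [Group A] {π : G →* MulAut A} {b c : G → A}

/-- `b : G → A` is a (non-abelian) 1-cocycle with respect to the action `π` of `G` on `A`. -/
def IsOneCocycle (π : G →* MulAut A) (b : G → A) : Prop :=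
  ∀ g h, b (g * h) = b g * π g (b h)

namespace IsOneCocycle

theorem map_one (hb : IsOneCocycle π b) : b 1 = 1 := by
  simpa using hb 1 1

/-- The homomorphism `g ↦ (b g, g)` whose image is the graph of the 1-cocycle `b`. -/
def toSemidirectProduct (hb : IsOneCocycle π b) : G →* A ⋊[π] G where
  toFun g := ⟨b g, g⟩
  map_one' := SemidirectProduct.ext hb.map_one rfl
  map_mul' g h := SemidirectProduct.ext (hb g h) rfl

theorem eq_of_eqOn_of_closure_eq_top (hb : IsOneCocycle π b) (hc : IsOneCocycle π c) {s : Set G}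
    (hs : Subgroup.closure s = ⊤) (h : s.EqOn b c) : b = c := by
  have graph_eq : hb.toSemidirectProduct = hc.toSemidirectProduct :=
    MonoidHom.eq_of_eqOn_dense hs fun g hg => SemidirectProduct.ext (h hg) rfl
  funext g
  exact congrArg SemidirectProduct.left (DFunLike.congr_fun graph_eq g)

theorem of_rightHom_comp_eq_id {F : G →* A ⋊[π] G}
    (hF : SemidirectProduct.rightHom.comp F = MonoidHom.id G) :
    IsOneCocycle π fun g => (F g).left := by
  intro g h
  have hg : (F g).right = g := DFunLike.congr_fun hF g
  simp only [map_mul, SemidirectProduct.mul_left, hg]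

theorem existsUnique_affine_eq (hb : IsOneCocycle π b) (hbij : Function.Bijective b) (a a' : A) :
    ∃! g, b g * π g a = a' := by
  obtain ⟨h, rfl⟩ := hbij.surjective a
  obtain ⟨k, rfl⟩ := hbij.surjective a'
  refine ⟨k * h⁻¹, ?_, fun g hg => eq_mul_inv_of_mul_eq (hbij.injective ?_)⟩
  · change b (k * h⁻¹) * π (k * h⁻¹) (b h) = b k
    rw [← hb, inv_mul_cancel_right]
  · rw [hb, hg]

end IsOneCocycle

end Cocycle

theorem presentedGroup_induction {X : Type*} {rels : Set (FreeGroup X)}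
    {p : PresentedGroup rels → Prop} (one : p 1) (of : ∀ x, p (PresentedGroup.of x))
    (mul : ∀ g h, p g → p h → p (g * h)) (inv : ∀ g, p g → p g⁻¹) (g : PresentedGroup rels) :
    p g := by
  have hg : g ∈ Subgroup.closure (Set.range PresentedGroup.of) :=
    (PresentedGroup.closure_range_of _).ge (Subgroup.mem_top g)
  induction hg using Subgroup.closure_induction with
  | mem _ hx => obtain ⟨x, rfl⟩ := hx; exact of x
  | one => exact one
  | mul g h _ _ hg hh => exact mul g h hg hh
  | inv g _ hg => exact inv g hg

section YangBaxter

variable {X : Type*} {α β αinv : X → X → X}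

namespace StructureGroup

theorem of_mul_of (x y : X) :
    (PresentedGroup.of x * PresentedGroup.of y : StructureGroup α β) =
      PresentedGroup.of (α x y) * PresentedGroup.of (β y x) :=
  PresentedGroup.mk_eq_mk_of_mul_inv_mem ⟨x, y, rfl⟩

variable {H : Type*} [Group H] (f : X → H)

/-- The homomorphism `G_R → H` induced by a map on generators that respects the relations. -/
def lift (hf : ∀ x y, f x * f y = f (α x y) * f (β y x)) : StructureGroup α β →* H :=
  PresentedGroup.toGroup (f := f) <| by
    rintro _ ⟨x, y, rfl⟩
    simpa only [map_mul, map_inv, FreeGroup.lift_apply_of, mul_inv_eq_one] using hf x y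

theorem lift_of (hf : ∀ x y, f x * f y = f (α x y) * f (β y x)) (x : X) :
    lift f hf (PresentedGroup.of x) = f x :=
  PresentedGroup.toGroup.of _

end StructureGroup

/-- The derived operation `φ_R(x, y) = α_y(β_{α_x⁻¹(y)}(x))` of `R`. -/
def derivedOp (α β αinv : X → X → X) (x y : X) : X :=
  α y (β (αinv x y) x)

namespace DerivedGroup

theorem of_mul_of (x y : X) :
    (PresentedGroup.of x * PresentedGroup.of y : DerivedGroup α β αinv) =
      PresentedGroup.of y * PresentedGroup.of (derivedOp α β αinv x y) :=
  PresentedGroup.mk_eq_mk_of_mul_inv_mem ⟨x, y, rfl⟩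

variable {H : Type*} [Group H] (f : X → H)

/-- The homomorphism `A_R → H` induced by a map on generators that respects the relations. -/
def lift (hf : ∀ x y, f x * f y = f y * f (derivedOp α β αinv x y)) :
    DerivedGroup α β αinv →* H :=
  PresentedGroup.toGroup (f := f) <| by
    rintro _ ⟨x, y, rfl⟩
    simpa only [derivedOp, map_mul, map_inv, FreeGroup.lift_apply_of, mul_inv_eq_one]
      using hf x y

theorem lift_of (hf : ∀ x y, f x * f y = f y * f (derivedOp α β αinv x y)) (x : X) :
    lift f hf (PresentedGroup.of x) = f x :=
  PresentedGroup.toGroup.of _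

end DerivedGroup

theorem derivedOp_apply (hl : ∀ x, Function.LeftInverse (αinv x) (α x)) (x y : X) :
    derivedOp α β αinv x (α x y) = α (α x y) (β y x) := by
  rw [derivedOp, hl]

namespace IsBraided

theorem α_α (hYB : IsBraided (YBEform α β)) (x y z : X) :
    α (α x y) (α (β y x) z) = α x (α y z) :=
  congrArg Prod.fst (congrFun hYB (x, y, z))

theorem β_α (hYB : IsBraided (YBEform α β)) (x y z : X) :
    β (α (β y x) z) (α x y) = α (β (α y z) x) (β z y) :=
  congrArg (fun p => p.2.1) (congrFun hYB (x, y, z))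

variable (hYB : IsBraided (YBEform α β))
  (hinv : ∀ x, Function.LeftInverse (αinv x) (α x) ∧ Function.RightInverse (αinv x) (α x))

include hYB hinv

theorem β_diagonal (y : X) :
    β (αinv y y) y = α (αinv y y) (β (αinv (αinv y y) (αinv y y)) (αinv y y)) := by
  set u := αinv y y
  have α_y_u : α y u = y := (hinv y).2 y
  have α_u_diagonal : α u (αinv u u) = u := (hinv u).2 u
  have α_eq (z : X) : α (β u y) z = α u z := by
    have h := hYB.α_α y u z
    rw [α_y_u] at h
    exact (hinv y).1.injective h
  have h := hYB.β_α y u (αinv u u)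
  rwa [α_eq, α_u_diagonal, α_y_u, α_eq] at h

theorem bijective_diagonal (hβ : ∀ x, Function.Bijective (β x)) :
    Function.Bijective fun x => αinv x x := by
  refine ⟨fun y z (hyz : αinv y y = αinv z z) => ?_, fun u => ?_⟩
  · apply (hβ (αinv y y)).injective
    rw [hYB.β_diagonal hinv y, hyz, hYB.β_diagonal hinv z]
  · obtain ⟨w, hw⟩ := (hβ u).surjective u
    have α_fix : α (α w u) u = α w u := by
      have h := hYB.α_α w u (αinv u u)
      rwa [hw, (hinv u).2] at h
    have h := (hinv (α w u)).1 u
    rw [α_fix] at h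
    exact ⟨α w u, h⟩

theorem α_derivedOp (a x y : X) :
    α a (derivedOp α β αinv x y) = derivedOp α β αinv (α a x) (α a y) := by
  have hl x := (hinv x).1
  obtain ⟨z, rfl⟩ := (hinv x).2.surjective y
  calc α a (derivedOp α β αinv x (α x z))
      = α a (α (α x z) (β z x)) := by rw [derivedOp_apply hl]
    _ = α (α a (α x z)) (α (β (α x z) a) (β z x)) := (hYB.α_α a (α x z) (β z x)).symm
    _ = α (α (α a x) (α (β x a) z)) (β (α (β x a) z) (α a x)) := by
        rw [hYB.α_α a x z, hYB.β_α]
    _ = derivedOp α β αinv (α a x) (α a (α x z)) := by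
        rw [← derivedOp_apply hl, hYB.α_α]

/-- The action of `G_R` on `X` that extends `α`. -/
def structureAction : StructureGroup α β →* Equiv.Perm X :=
  StructureGroup.lift (fun x => ⟨α x, αinv x, (hinv x).1, (hinv x).2⟩) fun x y =>
    Equiv.ext fun z => (hYB.α_α x y z).symm

theorem structureAction_of (x y : X) :
    hYB.structureAction hinv (PresentedGroup.of x) y = α x y := by
  rw [structureAction, StructureGroup.lift_of, Equiv.coe_fn_mk]

theorem structureAction_of_symm_apply (x y : X) :
    (hYB.structureAction hinv (PresentedGroup.of x)).symm y = αinv x y := by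
  rw [structureAction, StructureGroup.lift_of, Equiv.coe_fn_symm_mk]

theorem structureAction_derivedOp (g : StructureGroup α β) (x y : X) :
    hYB.structureAction hinv g (derivedOp α β αinv x y) =
      derivedOp α β αinv (hYB.structureAction hinv g x) (hYB.structureAction hinv g y) := by
  induction g using presentedGroup_induction generalizing x y with
  | one => simp only [map_one, Equiv.Perm.one_apply]
  | of a => simp only [structureAction_of, hYB.α_derivedOp hinv]
  | mul g h hg hh => simp only [map_mul, Equiv.Perm.mul_apply, hh, hg]
  | inv g hg =>
    rw [map_inv, Equiv.Perm.inv_eq_iff_eq, hg, Equiv.Perm.inv_def, Equiv.apply_symm_apply,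
      Equiv.apply_symm_apply]

theorem mulAut_of_eq_of_structureAction {Θ : StructureGroup α β →* MulAut (DerivedGroup α β αinv)}
    (hΘ : ∀ x y : X, Θ (PresentedGroup.of x) (PresentedGroup.of y) = PresentedGroup.of (α x y))
    (g : StructureGroup α β) (x : X) :
    Θ g (PresentedGroup.of x) = PresentedGroup.of (hYB.structureAction hinv g x) := by
  induction g using presentedGroup_induction generalizing x with
  | one => simp only [map_one, MulAut.one_apply, Equiv.Perm.one_apply]
  | of a => rw [hΘ, structureAction_of]
  | mul g h hg hh => simp only [map_mul, MulAut.mul_apply, Equiv.Perm.mul_apply, hh, hg]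
  | inv g hg =>
    rw [map_inv, MulAut.inv_apply, MulEquiv.symm_apply_eq, hg, map_inv, Equiv.Perm.inv_def,
      Equiv.apply_symm_apply]

/-- The map `g ↦ g · ι_G(g⁻¹ • x)` through which the generator `ι_A(x)` of `A_R` acts on `G_R`. -/
def twistedTranslation (x : X) (g : StructureGroup α β) : StructureGroup α β :=
  g * PresentedGroup.of ((hYB.structureAction hinv g).symm x)

theorem twistedTranslation_structureAction (g : StructureGroup α β) (x : X) :
    hYB.twistedTranslation hinv (hYB.structureAction hinv g x) g = g * PresentedGroup.of x := by
  rw [twistedTranslation, Equiv.symm_apply_apply]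

theorem structureAction_twistedTranslation_symm_apply (x y : X) (g : StructureGroup α β) :
    (hYB.structureAction hinv (hYB.twistedTranslation hinv x g)).symm y =
      αinv ((hYB.structureAction hinv g).symm x) ((hYB.structureAction hinv g).symm y) := by
  rw [twistedTranslation, map_mul, Equiv.Perm.mul_def, Equiv.symm_trans_apply,
    structureAction_of_symm_apply]

theorem bijective_twistedTranslation (hdiag : Function.Bijective fun x => αinv x x) (x : X) :
    Function.Bijective (hYB.twistedTranslation hinv x) := by
  set S := hYB.structureAction hinv
  refine ⟨fun g h hgh => ?_, fun k => ?_⟩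
  · have diagonal_eq : αinv ((S g).symm x) ((S g).symm x) = αinv ((S h).symm x) ((S h).symm x) := by
      rw [← hYB.structureAction_twistedTranslation_symm_apply hinv, hgh,
        hYB.structureAction_twistedTranslation_symm_apply hinv]
    have inv_eq : (S g).symm x = (S h).symm x := hdiag.injective diagonal_eq
    change g * PresentedGroup.of ((S g).symm x) = h * PresentedGroup.of ((S h).symm x) at hgh
    rwa [inv_eq, mul_left_inj] at hgh
  · obtain ⟨z, hz : αinv z z = (S k).symm x⟩ := hdiag.surjective ((S k).symm x)
    have hx : S (k * (PresentedGroup.of z)⁻¹) z = x := by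
      rw [map_mul, map_inv, Equiv.Perm.mul_apply, Equiv.Perm.inv_def,
        structureAction_of_symm_apply, hz, Equiv.apply_symm_apply]
    refine ⟨k * (PresentedGroup.of z)⁻¹, ?_⟩
    nth_rw 1 [← hx]
    rw [twistedTranslation_structureAction, inv_mul_cancel_right]

theorem twistedTranslation_comm (x y : X) (g : StructureGroup α β) :
    hYB.twistedTranslation hinv y (hYB.twistedTranslation hinv x g) =
      hYB.twistedTranslation hinv (derivedOp α β αinv x y) (hYB.twistedTranslation hinv y g) := by
  set S := hYB.structureAction hinv
  set p := (S g).symm x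
  set q := (S g).symm y
  have hpq : (S g).symm (derivedOp α β αinv x y) = derivedOp α β αinv p q := by
    rw [Equiv.symm_apply_eq, hYB.structureAction_derivedOp, Equiv.apply_symm_apply,
      Equiv.apply_symm_apply]
  calc hYB.twistedTranslation hinv y (hYB.twistedTranslation hinv x g)
      = g * PresentedGroup.of p * PresentedGroup.of (αinv p q) := by
        rw [twistedTranslation, structureAction_twistedTranslation_symm_apply]; rfl
    _ = g * PresentedGroup.of q * PresentedGroup.of (β (αinv p q) p) := by
        rw [mul_assoc, StructureGroup.of_mul_of, (hinv p).2, mul_assoc]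
    _ = g * PresentedGroup.of q * PresentedGroup.of (αinv q (derivedOp α β αinv p q)) := by
        rw [derivedOp, (hinv q).1]
    _ = hYB.twistedTranslation hinv (derivedOp α β αinv x y)
          (hYB.twistedTranslation hinv y g) := by
        rw [← hpq, ← hYB.structureAction_twistedTranslation_symm_apply hinv]; rfl

variable (hdiag : Function.Bijective fun x => αinv x x)

/-- The right action of `A_R` on the set `G_R` by twisted translations; being a right action, it is
encoded as a homomorphism to the opposite of the permutation group. -/
noncomputable def derivedAction :
    DerivedGroup α β αinv →* (Equiv.Perm (StructureGroup α β))ᵐᵒᵖ :=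
  DerivedGroup.lift
    (fun x => MulOpposite.op <|
      Equiv.ofBijective _ (hYB.bijective_twistedTranslation hinv hdiag x))
    fun x y => MulOpposite.unop_injective <| Equiv.ext <| hYB.twistedTranslation_comm hinv x y

theorem derivedAction_of (x : X) (g : StructureGroup α β) :
    (hYB.derivedAction hinv hdiag (PresentedGroup.of x)).unop g =
      hYB.twistedTranslation hinv x g := by
  rw [derivedAction, DerivedGroup.lift_of, MulOpposite.unop_op, Equiv.ofBijective_apply]

theorem surjective_derivedAction_one :
    Function.Surjective fun a => (hYB.derivedAction hinv hdiag a).unop 1 := by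
  set F := hYB.derivedAction hinv hdiag
  have F_of (g : StructureGroup α β) (x : X) :
      (F (PresentedGroup.of (hYB.structureAction hinv g x))).unop g = g * PresentedGroup.of x := by
    rw [derivedAction_of, twistedTranslation_structureAction]
  intro g
  have hg : g ∈ Subgroup.closure (Set.range PresentedGroup.of) :=
    (PresentedGroup.closure_range_of _).ge (Subgroup.mem_top g)
  induction hg using Subgroup.closure_induction_right with
  | one => exact ⟨1, by simp only [map_one, MulOpposite.unop_one, Equiv.Perm.one_apply]⟩
  | mul_right g _ _ hx ih =>
    obtain ⟨x, rfl⟩ := hx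
    obtain ⟨a, ha : (F a).unop 1 = g⟩ := ih
    refine ⟨a * PresentedGroup.of (hYB.structureAction hinv g x), ?_⟩
    simp only [map_mul, MulOpposite.unop_mul, Equiv.Perm.mul_apply, ha, F_of]
  | mul_inv_cancel g _ _ hx ih =>
    obtain ⟨x, rfl⟩ := hx
    obtain ⟨a, ha : (F a).unop 1 = g⟩ := ih
    refine ⟨a * (PresentedGroup.of
      (hYB.structureAction hinv (g * (PresentedGroup.of x)⁻¹) x))⁻¹, ?_⟩
    beta_reduce
    rw [map_mul, map_inv F, MulOpposite.unop_mul, MulOpposite.unop_inv, Equiv.Perm.mul_apply,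
      ha, Equiv.Perm.inv_eq_iff_eq, F_of, inv_mul_cancel_right]

variable {Θ : StructureGroup α β →* MulAut (DerivedGroup α β αinv)}
  (hΘ : ∀ x y : X, Θ (PresentedGroup.of x) (PresentedGroup.of y) = PresentedGroup.of (α x y))
  {b : StructureGroup α β → DerivedGroup α β αinv}
  (hb_of : ∀ x, b (PresentedGroup.of x) = PresentedGroup.of x) (hb : IsOneCocycle Θ b)

include hΘ hb_of hb

theorem apply_derivedAction (a : DerivedGroup α β αinv) (g : StructureGroup α β) :
    b ((hYB.derivedAction hinv hdiag a).unop g) = b g * a := by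
  induction a using presentedGroup_induction generalizing g with
  | one => simp only [map_one, MulOpposite.unop_one, Equiv.Perm.one_apply, mul_one]
  | of x =>
    rw [derivedAction_of, twistedTranslation, hb, hb_of,
      hYB.mulAut_of_eq_of_structureAction hinv hΘ, Equiv.apply_symm_apply]
  | mul a a' ha ha' =>
    rw [map_mul, MulOpposite.unop_mul, Equiv.Perm.mul_apply, ha', ha, mul_assoc]
  | inv a ha =>
    rw [eq_mul_inv_iff_mul_eq, ← ha, map_inv, MulOpposite.unop_inv, Equiv.Perm.inv_def,
      Equiv.apply_symm_apply]

include hdiag in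
theorem bijective_of_isOneCocycle : Function.Bijective b := by
  have leftInverse : Function.LeftInverse b fun a => (hYB.derivedAction hinv hdiag a).unop 1 := by
    intro a
    rw [hYB.apply_derivedAction hinv hdiag hΘ hb_of hb, hb.map_one, one_mul]
  exact ⟨(leftInverse.rightInverse_of_surjective
    (hYB.surjective_derivedAction_one hinv hdiag)).injective, leftInverse.surjective⟩

end IsBraided

theorem exists_isOneCocycle (hl : ∀ x, Function.LeftInverse (αinv x) (α x))
    {Θ : StructureGroup α β →* MulAut (DerivedGroup α β αinv)}
    (hΘ : ∀ x y : X, Θ (PresentedGroup.of x) (PresentedGroup.of y) = PresentedGroup.of (α x y)) :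
    ∃ b, (∀ x, b (PresentedGroup.of x) = PresentedGroup.of x) ∧ IsOneCocycle Θ b := by
  let f (x : X) : DerivedGroup α β αinv ⋊[Θ] StructureGroup α β :=
    ⟨PresentedGroup.of x, PresentedGroup.of x⟩
  have f_mul (x y : X) : f x * f y = f (α x y) * f (β y x) := by
    refine SemidirectProduct.ext ?_ (StructureGroup.of_mul_of x y)
    simp only [f, SemidirectProduct.mul_left, hΘ]
    rw [DerivedGroup.of_mul_of, derivedOp_apply hl]
  let F := StructureGroup.lift f f_mul
  have F_of (x : X) : F (PresentedGroup.of x) = f x := StructureGroup.lift_of f f_mul x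
  refine ⟨fun g => (F g).left, fun x => congrArg SemidirectProduct.left (F_of x),
    .of_rightHom_comp_eq_id (PresentedGroup.ext fun x => ?_)⟩
  exact congrArg SemidirectProduct.right (F_of x)

end YangBaxter

theorem stmt8_general {X : Type*} (α β αinv : X → X → X)
    (hYB : IsBraided (YBEform α β))
    (hinv : ∀ x, Function.LeftInverse (αinv x) (α x) ∧
      Function.RightInverse (αinv x) (α x))
    (hdiag : Function.Bijective fun x => αinv x x)
    (Θ : StructureGroup α β →* MulAut (DerivedGroup α β αinv))
    (hΘ : ∀ x y : X, Θ (PresentedGroup.of x) (PresentedGroup.of y) =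
      PresentedGroup.of (α x y)) :
    (∃! b : StructureGroup α β → DerivedGroup α β αinv,
        (∀ x : X, b (PresentedGroup.of x) = PresentedGroup.of x) ∧
        (∀ g h : StructureGroup α β, b (g * h) = b g * Θ g (b h))) ∧
    (∀ b : StructureGroup α β → DerivedGroup α β αinv,
        ((∀ x : X, b (PresentedGroup.of x) = PresentedGroup.of x) ∧
          (∀ g h : StructureGroup α β, b (g * h) = b g * Θ g (b h))) →
        Function.Bijective b ∧
          ∀ a a' : DerivedGroup α β αinv, ∃! g : StructureGroup α β,
            b g * Θ g a = a') := by
  refine ⟨?_, fun b ⟨hb_of, (hb : IsOneCocycle Θ b)⟩ => ?_⟩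
  · obtain ⟨b, hb_of, hb⟩ := exists_isOneCocycle (fun x => (hinv x).1) hΘ
    refine ⟨b, ⟨hb_of, hb⟩, fun c ⟨hc_of, (hc : IsOneCocycle Θ c)⟩ => ?_⟩
    refine hc.eq_of_eqOn_of_closure_eq_top hb (PresentedGroup.closure_range_of _) ?_
    rintro _ ⟨x, rfl⟩
    rw [hc_of, hb_of]
  · have bijective_b : Function.Bijective b := hYB.bijective_of_isOneCocycle hinv hdiag hΘ hb_of hb
    exact ⟨bijective_b, hb.existsUnique_affine_eq bijective_b⟩

theorem stmt8 {X : Type*} (α β αinv : X → X → X)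
    (hbij : Function.Bijective (YBEform α β))
    (hYB : IsBraided (YBEform α β))
    (hα : ∀ x, Function.Bijective (α x)) (hβ : ∀ x, Function.Bijective (β x))
    (hinv : ∀ x, Function.LeftInverse (αinv x) (α x) ∧
      Function.RightInverse (αinv x) (α x))
    (Θ : StructureGroup α β →* MulAut (DerivedGroup α β αinv))
    (hΘ : ∀ x y : X, Θ (PresentedGroup.of x) (PresentedGroup.of y) =
      PresentedGroup.of (α x y)) :
    (∃! b : StructureGroup α β → DerivedGroup α β αinv,
        (∀ x : X, b (PresentedGroup.of x) = PresentedGroup.of x) ∧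
        (∀ g h : StructureGroup α β, b (g * h) = b g * Θ g (b h))) ∧
    (∀ b : StructureGroup α β → DerivedGroup α β αinv,
        ((∀ x : X, b (PresentedGroup.of x) = PresentedGroup.of x) ∧
          (∀ g h : StructureGroup α β, b (g * h) = b g * Θ g (b h))) →
        Function.Bijective b ∧
          ∀ a a' : DerivedGroup α β αinv, ∃! g : StructureGroup α β,
            b g * Θ g a = a') :=
  stmt8_general α β αinv hYB hinv (hYB.bijective_diagonal hinv hβ) Θ hΘ
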